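/- For every $n\ge0$ and real $t$: $\mathrm{Re}\big((B_n-A_n)\overline{B_n}\big)=\sum_{r=0}^n t^{2r}M_r(n)$, where $M_r(n)=\sum_{0\le k\le n}\rho_k\,\theta^kK_r(n-k)$. -/

import Mathlib

open scoped Classical

/-- `ρ 0 = 1`, `ρ n = a 1 ⋯ a n`. -/
noncomputable def rho (a : ℕ → ℝ) (n : ℕ) : ℝ := ∏ k ∈ Finset.Icc 1 n, a k

/-- `R_k^l = ∑_{s=k}^l η s · ρ l / ρ s`. -/
noncomputable def Rkl (a η : ℕ → ℝ) (k l : ℕ) : ℝ :=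
  ∑ s ∈ Finset.Icc k l, η s * (rho a l / rho a s)

/-- `T_k^l = (R_k^l)² ρ (k-1) / ρ l`. -/
noncomputable def Tkl (a η : ℕ → ℝ) (k l : ℕ) : ℝ :=
  (Rkl a η k l) ^ 2 * (rho a (k - 1) / rho a l)

/-- `Δ_r^n = ∑_{1 ≤ k₁ < ⋯ < k_r ≤ n} R_1^{k₁} R_{k₁+1}^{k₂} ⋯ R_{k_{r-1}+1}^{k_r}`
(`Δ_0^n = 1`, and `Δ_r^n = 0` for `r > n`). -/
noncomputable def Delta (a η : ℕ → ℝ) (r n : ℕ) : ℝ :=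
  ∑ k ∈ (Fintype.piFinset fun _ : Fin r => Finset.Icc 1 n).filter
      (fun k => ∀ i j : Fin r, i < j → k i < k j),
    ∏ i : Fin r, Rkl a η (if (i : ℕ) = 0 then 1 else k ⟨(i : ℕ) - 1, Nat.lt_of_le_of_lt (Nat.sub_le _ _) i.isLt⟩ + 1) (k i)

/-- `K_r(n) = ∑_{p=-r}^r (-1)^p Δ_{r+p}^n Δ_{r-p}^n`. -/
noncomputable def Kr (a η : ℕ → ℝ) (r n : ℕ) : ℝ :=
  ∑ p ∈ Finset.Icc (-(r : ℤ)) (r : ℤ),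
    (-1 : ℝ) ^ p * Delta a η ((r : ℤ) + p).toNat n * Delta a η ((r : ℤ) - p).toNat n

/-- Shift of the data: `θ^j` replaces `(a k, η k)` by `(a (k+j), η (k+j))`. -/
def shift (f : ℕ → ℝ) (j : ℕ) : ℕ → ℝ := fun k => f (k + j)

/-!
Write `D_n = B_n - A_n`. Peeling off the first entry of the continued fraction instead of the last
gives `B_{n+1} = D_{n+1} + a_1 θB_n` and `D_{n+1} = θD_n - i t η_1 θB_n`. As `i t η_1` is purely
imaginary, the pair satisfies `Re (D_{n+1} conj B_{n+1}) = |D_{n+1}|² + a_1 Re (θD_n conj θB_n)`,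
whence `Re (D_n conj B_n) = ∑ ρ_k |θ^k D_{n-k}|²`. The same two relations give
`D_n = 1 - i t ∑ R_1^m θ^m D_{n-m}`, which is also satisfied by `∑ (-i t)^r Δ_r^n`. So `D_n`
is a real polynomial evaluated at `-i t`, and its squared modulus is `∑ t^{2r} K_r(n)`.
-/

open Complex Finset Polynomial
open scoped ComplexConjugate

section Continuant

variable {R : Type*} [CommRing R]

/-- The `n`-th continuant of the continued fraction with partial denominators `b 1, b 2, …` and
partial numerators `-a 2, -a 3, …`: the solution of the three-term recurrence
`x n = b n * x (n - 1) - a n * x (n - 2)` with `x (-1) = 0` and `x 0 = 1`. The values `b 0`, `a 0`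
and `a 1` are ignored, so that indices agree with those of the recurrence. -/
def continuant (b a : ℕ → R) : ℕ → R
  | 0 => 1
  | 1 => b 1
  | n + 2 => b (n + 2) * continuant b a (n + 1) - a (n + 2) * continuant b a n

theorem continuant_add_two_eq_first (b a : ℕ → R) (n : ℕ) :
    continuant b a (n + 2) =
      b 1 * continuant (fun k => b (k + 1)) (fun k => a (k + 1)) (n + 1) -
        a 2 * continuant (fun k => b (k + 2)) (fun k => a (k + 2)) n := by
  induction n using Nat.twoStepInduction with
  | zero => simp only [continuant]; ring
  | one => simp only [continuant]; ring
  | more n ih₀ ih₁ =>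
    rw [continuant, ih₀, ih₁]
    simp only [continuant]
    ring

theorem eq_mul_continuant {b a x : ℕ → R} (h₁ : x 1 = x 0 * b 1)
    (hx : ∀ n, x (n + 2) = b (n + 2) * x (n + 1) - a (n + 2) * x n) (n : ℕ) :
    x n = x 0 * continuant b a n := by
  induction n using Nat.twoStepInduction with
  | zero => simp [continuant]
  | one => exact h₁
  | more n ih₀ ih₁ => rw [hx, ih₀, ih₁, continuant]; ring

end Continuant

section ImaginaryAxis

theorem sum_range_two_mul_eq_sum_even_add_odd {M : Type*} [AddCommMonoid M] (f : ℕ → M) (n : ℕ) :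
    ∑ s ∈ range (2 * n), f s = ∑ r ∈ range n, (f (2 * r) + f (2 * r + 1)) := by
  induction n with
  | zero => simp
  | succ n ih => rw [mul_add_one, sum_range_succ, sum_range_succ, ih, sum_range_succ, add_assoc]

theorem sum_antidiagonal_two_mul {M : Type*} [AddCommMonoid M] (f : ℕ → ℕ → M) (r : ℕ) :
    ∑ ij ∈ antidiagonal (2 * r), f ij.1 ij.2 =
      ∑ p ∈ Icc (-(r : ℤ)) r, f ((r : ℤ) + p).toNat ((r : ℤ) - p).toNat := by
  refine sum_bij' (fun ij _ => (ij.1 : ℤ) - r)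
    (fun p _ => (((r : ℤ) + p).toNat, ((r : ℤ) - p).toNat)) ?_ ?_ ?_ ?_ ?_
  · simp only [HasAntidiagonal.mem_antidiagonal, mem_Icc]; omega
  · simp only [HasAntidiagonal.mem_antidiagonal, mem_Icc]; omega
  · simp only [HasAntidiagonal.mem_antidiagonal, Prod.ext_iff]; omega
  · simp only [mem_Icc]; omega
  · rintro ⟨i, j⟩ hij
    rw [HasAntidiagonal.mem_antidiagonal] at hij
    congr 1 <;> omega

theorem re_aeval_I_mul {Q : ℝ[X]} {n : ℕ} (hQ : Q.natDegree < 2 * n) (t : ℝ) :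
    (aeval (I * t) Q).re = ∑ r ∈ range n, t ^ (2 * r) * ((-1) ^ r * Q.coeff (2 * r)) := by
  have pow_even (r : ℕ) : (I * t) ^ (2 * r) = (((-1) ^ r * t ^ (2 * r) : ℝ) : ℂ) := by
    rw [mul_pow, pow_mul, I_sq]; push_cast; rfl
  rw [aeval_eq_sum_range' hQ, sum_range_two_mul_eq_sum_even_add_odd, re_sum]
  refine sum_congr rfl fun r _ => ?_
  have re_even : (Q.coeff (2 * r) • (I * t) ^ (2 * r)).re =
      t ^ (2 * r) * ((-1) ^ r * Q.coeff (2 * r)) := by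
    rw [pow_even, smul_re, ofReal_re, smul_eq_mul]; ring
  have re_odd : (Q.coeff (2 * r + 1) • (I * t) ^ (2 * r + 1)).re = 0 := by
    rw [pow_succ, pow_even, smul_re, re_ofReal_mul]; simp
  rw [add_re, re_even, re_odd, add_zero]

theorem normSq_aeval_neg_I_mul (P : ℝ[X]) (t : ℝ) :
    normSq (aeval (-(I * t)) P) = (aeval (I * t) (P.comp (-X) * P)).re := by
  have conj_point : conj (-(I * t)) = I * t := by simp
  have factor : aeval (I * t) (P.comp (-X)) = aeval (-(I * t)) P := by
    rw [aeval_comp, map_neg, aeval_X]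
  have conj_factor : aeval (I * t) P = conj (aeval (-(I * t)) P) := by
    rw [← aeval_conj, conj_point]
  rw [map_mul, factor, conj_factor, mul_conj, ofReal_re]

theorem neg_one_pow_mul_coeff_comp_neg_X_mul {K : Type*} [Field K] (P : K[X]) (r : ℕ) :
    (-1) ^ r * (P.comp (-X) * P).coeff (2 * r) =
      ∑ p ∈ Icc (-(r : ℤ)) r,
        (-1 : K) ^ p * P.coeff ((r : ℤ) + p).toNat * P.coeff ((r : ℤ) - p).toNat := by
  have coeff_neg (i : ℕ) : (P.comp (-X)).coeff i = P.coeff i * (-1) ^ i := by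
    rw [← comp_C_mul_X_coeff, map_neg, map_one, neg_one_mul]
  rw [coeff_mul, sum_antidiagonal_two_mul fun i j => (P.comp (-X)).coeff i * P.coeff j, mul_sum]
  refine sum_congr rfl fun p hp => ?_
  have sign : (-1 : K) ^ r * (-1) ^ ((r : ℤ) + p).toNat = (-1) ^ p := by
    rw [mem_Icc] at hp
    have neg_one_ne : (-1 : K) ≠ 0 := neg_ne_zero.2 one_ne_zero
    rw [← zpow_natCast, ← zpow_natCast, Int.toNat_of_nonneg (by omega), ← zpow_add₀ neg_one_ne,
      ← add_assoc, zpow_add₀ neg_one_ne, (Even.add_self (r : ℤ)).neg_one_zpow, one_mul]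
  rw [coeff_neg, ← sign]
  ring

theorem normSq_aeval_neg_I_mul_eq_sum {P : ℝ[X]} {n : ℕ} (hP : P.natDegree ≤ n) (t : ℝ) :
    normSq (aeval (-(I * t)) P) =
      ∑ r ∈ range (n + 1), t ^ (2 * r) * ∑ p ∈ Icc (-(r : ℤ)) r,
        (-1 : ℝ) ^ p * P.coeff ((r : ℤ) + p).toNat * P.coeff ((r : ℤ) - p).toNat := by
  have hdeg : (P.comp (-X) * P).natDegree < 2 * (n + 1) :=
    calc (P.comp (-X) * P).natDegree
        ≤ (P.comp (-X)).natDegree + P.natDegree := natDegree_mul_le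
      _ = P.natDegree + P.natDegree := by rw [natDegree_comp, natDegree_neg, natDegree_X, mul_one]
      _ < 2 * (n + 1) := by omega
  rw [normSq_aeval_neg_I_mul, re_aeval_I_mul hdeg]
  simp_rw [neg_one_pow_mul_coeff_comp_neg_X_mul]

end ImaginaryAxis

section Shift

theorem shift_zero (f : ℕ → ℝ) : shift f 0 = f :=
  rfl

theorem shift_shift (f : ℕ → ℝ) (i j : ℕ) : shift (shift f i) j = shift f (i + j) := by
  funext k
  simp only [shift, add_assoc, add_comm j i]

theorem rho_add (a : ℕ → ℝ) (j n : ℕ) : rho a (j + n) = rho a j * rho (shift a j) n := by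
  induction n with
  | zero => simp [rho]
  | succ n ih =>
    have rho_succ (f : ℕ → ℝ) (k : ℕ) : rho f (k + 1) = rho f k * f (k + 1) :=
      prod_Icc_succ_top (by omega) f
    rw [← add_assoc, rho_succ, rho_succ, ih, shift, mul_assoc, add_comm j n, add_right_comm]

theorem rho_succ_eq_first_mul (a : ℕ → ℝ) (n : ℕ) : rho a (n + 1) = a 1 * rho (shift a 1) n := by
  rw [add_comm, rho_add]
  simp [rho]

theorem sum_rho_smul_shift_succ {V : Type*} [AddCommMonoid V] [Module ℝ V]
    (a η : ℕ → ℝ) (F : (ℕ → ℝ) → (ℕ → ℝ) → ℕ → V) (n : ℕ) :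
    ∑ k ∈ range (n + 2), rho a k • F (shift a k) (shift η k) (n + 1 - k) =
      F a η (n + 1) + a 1 • ∑ k ∈ range (n + 1), rho (shift a 1) k •
        F (shift (shift a 1) k) (shift (shift η 1) k) (n - k) := by
  rw [sum_range_succ', add_comm, smul_sum]
  congr 1
  · simp [rho, shift_zero]
  · refine sum_congr rfl fun k _ => ?_
    rw [rho_succ_eq_first_mul, mul_smul, shift_shift, shift_shift, add_comm 1 k,
      Nat.add_sub_add_right]

theorem shift_ne_zero {a : ℕ → ℝ} (ha : ∀ k, 1 ≤ k → a k ≠ 0) (j k : ℕ) (hk : 1 ≤ k) :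
    shift a j k ≠ 0 :=
  ha (k + j) (by omega)

theorem rho_ne_zero {a : ℕ → ℝ} (ha : ∀ k, 1 ≤ k → a k ≠ 0) (n : ℕ) : rho a n ≠ 0 :=
  prod_ne_zero_iff.2 fun k hk => ha k (mem_Icc.1 hk).1

theorem Rkl_shift {a : ℕ → ℝ} {j : ℕ} (hj : rho a j ≠ 0) (η : ℕ → ℝ) (k l : ℕ) :
    Rkl (shift a j) (shift η j) k l = Rkl a η (k + j) (l + j) := by
  rw [Rkl, Rkl, ← map_add_right_Icc, sum_map]
  refine sum_congr rfl fun s _ => ?_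
  rw [addRightEmbedding_apply, add_comm l, add_comm s, rho_add, rho_add, mul_div_mul_left _ _ hj,
    shift, add_comm s]

theorem Rkl_one_succ {a : ℕ → ℝ} (ha : a 1 ≠ 0) (η : ℕ → ℝ) (m : ℕ) :
    Rkl a η 1 (m + 1) = Rkl (shift a 1) (shift η 1) 1 m + η 1 * rho (shift a 1) m := by
  have hρ : rho a 1 = a 1 := by simp [rho]
  rw [Rkl_shift (by rwa [hρ]), Rkl, Rkl, ← insert_Icc_add_one_left_eq_Icc (by omega : 1 ≤ m + 1),
    sum_insert (by simp), hρ, rho_succ_eq_first_mul, mul_div_cancel_left₀ _ ha, add_comm]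

theorem sum_Rkl_one_smul_succ {V : Type*} [AddCommMonoid V] [Module ℝ V]
    {a : ℕ → ℝ} (ha : a 1 ≠ 0) (η : ℕ → ℝ) (f : ℕ → V) (n : ℕ) :
    ∑ m ∈ Icc 1 (n + 1), Rkl a η 1 m • f m =
      ∑ m ∈ Icc 1 n, Rkl (shift a 1) (shift η 1) 1 m • f (m + 1) +
        η 1 • ∑ k ∈ range (n + 1), rho (shift a 1) k • f (k + 1) := by
  have sum_Icc_one (g : ℕ → V) (N : ℕ) : ∑ m ∈ Icc 1 N, g m = ∑ k ∈ range N, g (k + 1) := by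
    rw [range_eq_Ico, sum_Ico_add', zero_add, Ico_add_one_right_eq_Icc]
  have extend_to_zero : ∑ m ∈ Icc 1 n, Rkl (shift a 1) (shift η 1) 1 m • f (m + 1) =
      ∑ k ∈ range (n + 1), Rkl (shift a 1) (shift η 1) 1 k • f (k + 1) := by
    rw [sum_Icc_one, sum_range_succ']
    simp [Rkl]
  rw [sum_Icc_one, extend_to_zero, smul_sum, ← sum_add_distrib]
  refine sum_congr rfl fun k _ => ?_
  rw [Rkl_one_succ ha, add_smul, mul_smul]

end Shift

section Delta

/-- The chains `1 ≤ k₁ < ⋯ < k_r ≤ n` indexing the sum `Δ_r^n`; the entry `k_{i+1}` is `k i`. -/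
def chains (r n : ℕ) : Finset (Fin r → ℕ) :=
  (Fintype.piFinset fun _ : Fin r => Icc 1 n).filter fun k => ∀ i j : Fin r, i < j → k i < k j

/-- The summand `R_1^{k₁} R_{k₁+1}^{k₂} ⋯ R_{k_{r-1}+1}^{k_r}` of `Δ_r^n` at a chain `k`. -/
noncomputable def chainWeight (a η : ℕ → ℝ) {r : ℕ} (k : Fin r → ℕ) : ℝ :=
  ∏ i : Fin r, Rkl a η (if (i : ℕ) = 0 then 1 else
    k ⟨(i : ℕ) - 1, Nat.lt_of_le_of_lt (Nat.sub_le _ _) i.isLt⟩ + 1) (k i)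

theorem Delta_eq_sum_chainWeight (a η : ℕ → ℝ) (r n : ℕ) :
    Delta a η r n = ∑ k ∈ chains r n, chainWeight a η k :=
  rfl

theorem mem_chains {r n : ℕ} {k : Fin r → ℕ} :
    k ∈ chains r n ↔ (∀ i, 1 ≤ k i ∧ k i ≤ n) ∧ StrictMono k := by
  simp only [chains, mem_filter, Fintype.mem_piFinset, mem_Icc, StrictMono]

theorem cons_add_mem_chains {r n m : ℕ} {k : Fin r → ℕ} (hm : m ∈ Icc 1 n)
    (hk : k ∈ chains r (n - m)) :
    (Fin.cons m fun i => k i + m : Fin (r + 1) → ℕ) ∈ chains (r + 1) n := by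
  rw [mem_Icc] at hm
  rw [mem_chains] at hk ⊢
  obtain ⟨hbound, hmono⟩ := hk
  constructor
  · rw [Fin.forall_fin_succ]
    refine ⟨hm, fun i => ?_⟩
    have := hbound i
    simp only [Fin.cons_succ]
    omega
  · intro i j hij
    cases j using Fin.cases with
    | zero => exact absurd hij (Fin.not_lt_zero i)
    | succ j =>
      cases i using Fin.cases with
      | zero => exact Nat.lt_add_of_pos_left (hbound j).1
      | succ i => exact Nat.add_lt_add_right (hmono (Fin.succ_lt_succ_iff.1 hij)) m

theorem tail_sub_mem_chains {r n : ℕ} {k : Fin (r + 1) → ℕ} (hk : k ∈ chains (r + 1) n) :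
    (fun i : Fin r => k i.succ - k 0) ∈ chains r (n - k 0) := by
  rw [mem_chains] at hk ⊢
  obtain ⟨hbound, hmono⟩ := hk
  have head_lt (i : Fin r) : k 0 < k i.succ := hmono i.succ_pos
  refine ⟨fun i => ?_, fun i j hij => ?_⟩
  · have := head_lt i
    have := hbound i.succ
    omega
  · exact Nat.sub_lt_sub_right (head_lt i).le (hmono (Fin.succ_lt_succ_iff.2 hij))

theorem chainWeight_cons_add {a : ℕ → ℝ} {m : ℕ} (hm : rho a m ≠ 0) (η : ℕ → ℝ) {r : ℕ}
    (k : Fin r → ℕ) :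
    chainWeight a η (Fin.cons m fun i => k i + m : Fin (r + 1) → ℕ) =
      Rkl a η 1 m * chainWeight (shift a m) (shift η m) k := by
  rw [chainWeight, Fin.prod_univ_succ, chainWeight]
  congr 1
  refine prod_congr rfl fun ⟨i, hi⟩ _ => ?_
  rw [Rkl_shift hm]
  cases i with
  | zero => exact congrArg (Rkl a η · _) (add_comm m 1)
  | succ i => exact congrArg (Rkl a η · _) (add_right_comm _ m 1)

theorem Delta_zero (a η : ℕ → ℝ) (n : ℕ) : Delta a η 0 n = 1 := by
  simp [Delta]

theorem Delta_succ {a : ℕ → ℝ} (ha : ∀ k, 1 ≤ k → a k ≠ 0) (η : ℕ → ℝ) (r n : ℕ) :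
    Delta a η (r + 1) n =
      ∑ m ∈ Icc 1 n, Rkl a η 1 m * Delta (shift a m) (shift η m) r (n - m) := by
  simp_rw [Delta_eq_sum_chainWeight, mul_sum]
  rw [sum_sigma']
  symm
  refine sum_bij' (fun x _ => (Fin.cons x.1 fun i => x.2 i + x.1 : Fin (r + 1) → ℕ))
    (fun k _ => ⟨k 0, fun i => k i.succ - k 0⟩) ?_ ?_ ?_ ?_ ?_
  · intro x hx
    exact cons_add_mem_chains (mem_sigma.1 hx).1 (mem_sigma.1 hx).2
  · intro k hk
    exact mem_sigma.2 ⟨mem_Icc.2 ((mem_chains.1 hk).1 0), tail_sub_mem_chains hk⟩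
  · intro x _
    simp
  · intro k hk
    funext i
    cases i using Fin.cases with
    | zero => rfl
    | succ i => exact Nat.sub_add_cancel ((mem_chains.1 hk).2 i.succ_pos).le
  · intro x _
    exact (chainWeight_cons_add (rho_ne_zero ha x.1) η x.2).symm

theorem Delta_eq_zero_of_lt (a η : ℕ → ℝ) {r n : ℕ} (h : n < r) : Delta a η r n = 0 := by
  refine sum_eq_zero fun k hk => absurd h (not_lt.2 ?_)
  obtain ⟨hbound, hmono⟩ := mem_chains.1 hk
  have := card_le_card_of_injOn k (s := univ) (t := Icc 1 n) (fun i _ => mem_Icc.2 (hbound i))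
    hmono.injective.injOn
  simpa using this

/-- The generating polynomial `∑_r Δ_r^n X^r`, whose value at `-i t` is `B_n - A_n`. -/
noncomputable def deltaPoly (a η : ℕ → ℝ) (n : ℕ) : ℝ[X] :=
  ∑ r ∈ range (n + 1), monomial r (Delta a η r n)

theorem coeff_deltaPoly (a η : ℕ → ℝ) (n r : ℕ) : (deltaPoly a η n).coeff r = Delta a η r n := by
  simp only [deltaPoly, finsetSum_coeff, coeff_monomial, sum_ite_eq', mem_range]
  split_ifs with h
  · rfl
  · rw [Delta_eq_zero_of_lt a η (by omega)]

theorem natDegree_deltaPoly_le (a η : ℕ → ℝ) (n : ℕ) : (deltaPoly a η n).natDegree ≤ n :=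
  natDegree_le_iff_coeff_eq_zero.2 fun _ hr => by
    rw [coeff_deltaPoly, Delta_eq_zero_of_lt a η hr]

theorem deltaPoly_eq {a : ℕ → ℝ} (ha : ∀ k, 1 ≤ k → a k ≠ 0) (η : ℕ → ℝ) (n : ℕ) :
    deltaPoly a η n =
      1 + X * ∑ m ∈ Icc 1 n, C (Rkl a η 1 m) * deltaPoly (shift a m) (shift η m) (n - m) := by
  ext r
  cases r with
  | zero => simp [coeff_deltaPoly, Delta_zero]
  | succ r => simp [coeff_deltaPoly, Delta_succ ha, coeff_one]

end Delta

section Convergents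

variable (a η : ℕ → ℝ) (t : ℝ)

/-- The denominators `B_n`, as continuants of the sequences `b_k - i t η_k` and `a_k`. -/
noncomputable def convDenom : ℕ → ℂ :=
  continuant (fun k => ((1 + a k : ℝ) : ℂ) - I * t * η k) fun k => (a k : ℂ)

/-- The numerators `A_n`, encoded through the denominators of the shifted data by
`A_{n+1} = a_1 θB_n`. -/
noncomputable def convNum : ℕ → ℂ
  | 0 => 0
  | n + 1 => a 1 * convDenom (shift a 1) (shift η 1) t n

/-- The difference `D_n = B_n - A_n`, a polynomial in `-i t` with coefficients `Δ_r^n`. -/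
noncomputable def convDiff (n : ℕ) : ℂ :=
  convDenom a η t n - convNum a η t n

theorem convDiff_zero : convDiff a η t 0 = 1 := by
  simp [convDiff, convDenom, convNum, continuant]

theorem convDenom_zero : convDenom a η t 0 = 1 :=
  rfl

theorem convDenom_succ (n : ℕ) :
    convDenom a η t (n + 1) =
      convDiff a η t (n + 1) + a 1 * convDenom (shift a 1) (shift η 1) t n := by
  rw [convDiff, convNum, sub_add_cancel]

theorem convDiff_succ (n : ℕ) :
    convDiff a η t (n + 1) =
      convDiff (shift a 1) (shift η 1) t n -
        I * t * η 1 * convDenom (shift a 1) (shift η 1) t n := by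
  cases n with
  | zero =>
    simp only [convDiff, convDenom, convNum, continuant]
    push_cast
    ring
  | succ n =>
    have first_peeled : convDenom a η t (n + 2) =
        (((1 + a 1 : ℝ) : ℂ) - I * t * η 1) * convDenom (shift a 1) (shift η 1) t (n + 1) -
          a 2 * convDenom (shift (shift a 1) 1) (shift (shift η 1) 1) t n :=
      continuant_add_two_eq_first _ _ n
    simp only [convDiff, convNum, first_peeled, shift]
    push_cast
    ring

theorem re_convDiff_mul_conj_convDenom (n : ℕ) :
    (convDiff a η t n * conj (convDenom a η t n)).re =
      ∑ k ∈ range (n + 1), rho a k • normSq (convDiff (shift a k) (shift η k) t (n - k)) := by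
  induction n generalizing a η with
  | zero => simp [convDiff_zero, convDenom_zero, rho]
  | succ n ih =>
    set D := convDiff a η t (n + 1) with hD
    set D' := convDiff (shift a 1) (shift η 1) t n
    set B' := convDenom (shift a 1) (shift η 1) t n
    have drop_imaginary : (D * conj B').re = (D' * conj B').re := by
      have : D * conj B' = D' * conj B' - ((t * η 1 * normSq B' : ℝ) : ℂ) * I := by
        rw [hD, convDiff_succ]
        push_cast
        rw [← mul_conj]
        ring
      rw [this, sub_re, re_ofReal_mul, I_re, mul_zero, sub_zero]
    calc (D * conj (convDenom a η t (n + 1))).re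
        = (normSq D + a 1 * (D * conj B')).re := by
          rw [convDenom_succ, map_add, map_mul, conj_ofReal, mul_add, mul_conj, mul_left_comm]
      _ = normSq D + a 1 • (D' * conj B').re := by
          rw [add_re, ofReal_re, re_ofReal_mul, drop_imaginary, smul_eq_mul]
      _ = _ := by
          rw [ih, sum_rho_smul_shift_succ a η fun a η n => normSq (convDiff a η t n)]

theorem convDenom_eq_sum_rho_smul_convDiff (n : ℕ) :
    convDenom a η t n =
      ∑ k ∈ range (n + 1), rho a k • convDiff (shift a k) (shift η k) t (n - k) := by
  induction n generalizing a η with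
  | zero => simp [convDiff_zero, convDenom_zero, rho]
  | succ n ih =>
    rw [convDenom_succ, ih, sum_rho_smul_shift_succ a η fun a η n => convDiff a η t n, real_smul]

variable {a}

theorem convDiff_eq_one_sub_sum_Rkl (ha : ∀ k, 1 ≤ k → a k ≠ 0) (n : ℕ) :
    convDiff a η t n =
      1 - I * t * ∑ m ∈ Icc 1 n, Rkl a η 1 m • convDiff (shift a m) (shift η m) t (n - m) := by
  induction n generalizing a η with
  | zero => simp [convDiff_zero]
  | succ n ih =>
    rw [convDiff_succ, ih (shift η 1) (shift_ne_zero ha 1), convDenom_eq_sum_rho_smul_convDiff,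
      sum_Rkl_one_smul_succ (ha 1 le_rfl), real_smul (x := η 1)]
    simp only [shift_shift, add_comm 1, Nat.add_sub_add_right]
    ring

theorem convDiff_eq_aeval_deltaPoly (ha : ∀ k, 1 ≤ k → a k ≠ 0) (n : ℕ) :
    convDiff a η t n = aeval (-(I * t)) (deltaPoly a η n) := by
  induction n using Nat.strong_induction_on generalizing a η with
  | h n ih =>
    rw [convDiff_eq_one_sub_sum_Rkl η t ha, deltaPoly_eq ha]
    simp only [map_add, map_one, map_mul, aeval_X, map_sum, aeval_C, neg_mul, sub_eq_add_neg]
    congr 3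
    refine sum_congr rfl fun m hm => ?_
    rw [mem_Icc] at hm
    rw [ih (n - m) (by omega) (shift η m) (shift_ne_zero ha m), real_smul, coe_algebraMap]

theorem normSq_convDiff (ha : ∀ k, 1 ≤ k → a k ≠ 0) {n N : ℕ} (hn : n ≤ N) :
    normSq (convDiff a η t n) = ∑ r ∈ range (N + 1), t ^ (2 * r) * Kr a η r n := by
  rw [convDiff_eq_aeval_deltaPoly η t ha,
    normSq_aeval_neg_I_mul_eq_sum ((natDegree_deltaPoly_le a η n).trans hn)]
  simp only [coeff_deltaPoly, Kr]

end Convergents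

theorem eq_convDenom_of_recurrence {a η : ℕ → ℝ} {t : ℝ} {B : ℤ → ℂ}
    (hBm : B (-1) = 0) (hB0 : B 0 = 1)
    (hB : ∀ n : ℕ, 1 ≤ n →
      B n = (((1 + a n : ℝ) : ℂ) - I * t * η n) * B ((n : ℤ) - 1) - a n * B ((n : ℤ) - 2))
    (n : ℕ) :
    B n = convDenom a η t n := by
  have h₁ : B (1 : ℕ) = B (0 : ℕ) * (((1 + a 1 : ℝ) : ℂ) - I * t * η 1) := by
    rw [hB 1 le_rfl]
    simp [hB0, hBm]
  have hrec (m : ℕ) : B (m + 2 : ℕ) = (((1 + a (m + 2) : ℝ) : ℂ) - I * t * η (m + 2)) *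
      B (m + 1 : ℕ) - a (m + 2) * B m := by
    rw [hB (m + 2) (by omega)]
    congr 3 <;> push_cast <;> ring_nf
  have hmul : B n = B 0 * convDenom a η t n := eq_mul_continuant (x := fun m : ℕ => B m) h₁ hrec n
  rw [hmul, hB0, one_mul]

theorem eq_convNum_of_recurrence {a η : ℕ → ℝ} {t : ℝ} {A : ℤ → ℂ}
    (hA0 : A 0 = 0) (hA1 : A 1 = a 1)
    (hA : ∀ n : ℕ, 2 ≤ n →
      A n = (((1 + a n : ℝ) : ℂ) - I * t * η n) * A ((n : ℤ) - 1) - a n * A ((n : ℤ) - 2))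
    (n : ℕ) :
    A n = convNum a η t n := by
  cases n with
  | zero => exact hA0
  | succ n =>
    have hrec (m : ℕ) : A (m + 2 : ℕ) =
        (((1 + a (m + 2) : ℝ) : ℂ) - I * t * η (m + 2)) * A (m + 1 : ℕ) - a (m + 2) * A m := by
      rw [hA (m + 2) (by omega)]
      congr 3 <;> push_cast <;> ring_nf
    have h₁ : A (2 : ℕ) = A (1 : ℕ) * (((1 + a 2 : ℝ) : ℂ) - I * t * η 2) := by
      simpa [hA0, mul_comm] using hrec 0
    have hmul : A (n + 1 : ℕ) = A 1 * convDenom (shift a 1) (shift η 1) t n :=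
      eq_mul_continuant (x := fun m : ℕ => A (m + 1 : ℕ)) h₁ (fun m => hrec (m + 1)) n
    rw [hmul, hA1, convNum]

theorem stmt_16_general
    (a η : ℕ → ℝ) (ha : ∀ k : ℕ, 1 ≤ k → a k ≠ 0) (t : ℝ)
    (B : ℤ → ℂ) (hBm : B (-1) = 0) (hB0 : B 0 = 1)
    (hB : ∀ n : ℕ, 1 ≤ n →
      B (n : ℤ) = (((1 + a n : ℝ) : ℂ) - Complex.I * (t : ℂ) * ((η n : ℝ) : ℂ)) * B ((n : ℤ) - 1)
        - ((a n : ℝ) : ℂ) * B ((n : ℤ) - 2))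
    (A : ℤ → ℂ) (hA0 : A 0 = 0) (hA1 : A 1 = ((a 1 : ℝ) : ℂ))
    (hA : ∀ n : ℕ, 2 ≤ n →
      A (n : ℤ) = (((1 + a n : ℝ) : ℂ) - Complex.I * (t : ℂ) * ((η n : ℝ) : ℂ)) * A ((n : ℤ) - 1)
        - ((a n : ℝ) : ℂ) * A ((n : ℤ) - 2)) :
    ∀ n : ℕ,
      ((B (n : ℤ) - A (n : ℤ)) * star (B (n : ℤ))).re =
        ∑ r ∈ Finset.range (n + 1), t ^ (2 * r) *
          ∑ k ∈ Finset.range (n + 1), rho a k * Kr (shift a k) (shift η k) r (n - k) := by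
  intro n
  calc ((B n - A n) * star (B n)).re
      = (convDiff a η t n * conj (convDenom a η t n)).re := by
        rw [eq_convDenom_of_recurrence hBm hB0 hB, eq_convNum_of_recurrence hA0 hA1 hA,
          convDiff, starRingEnd_apply]
    _ = ∑ k ∈ range (n + 1), rho a k • normSq (convDiff (shift a k) (shift η k) t (n - k)) :=
        re_convDiff_mul_conj_convDenom a η t n
    _ = ∑ k ∈ range (n + 1), ∑ r ∈ range (n + 1),
          t ^ (2 * r) * (rho a k * Kr (shift a k) (shift η k) r (n - k)) := by
        refine sum_congr rfl fun k _ => ?_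
        rw [normSq_convDiff (shift η k) t (shift_ne_zero ha k) (n.sub_le k), smul_eq_mul, mul_sum]
        exact sum_congr rfl fun r _ => mul_left_comm _ _ _
    _ = _ := by
        simp_rw [mul_sum]
        exact sum_comm

/-- `Re((B n - A n) · conj (B n)) = ∑_{r=0}^n t^{2r} M_r(n)` with
`M_r(n) = ∑_{0≤k≤n} ρ k · θ^k K_r(n-k)`. -/
theorem stmt_16
    (a η : ℕ → ℝ) (ha : ∀ k : ℕ, 1 ≤ k → 0 < a k) (t : ℝ)
    (B : ℤ → ℂ) (hBm : B (-1) = 0) (hB0 : B 0 = 1)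
    (hB : ∀ n : ℕ, 1 ≤ n →
      B (n : ℤ) = (((1 + a n : ℝ) : ℂ) - Complex.I * (t : ℂ) * ((η n : ℝ) : ℂ)) * B ((n : ℤ) - 1)
        - ((a n : ℝ) : ℂ) * B ((n : ℤ) - 2))
    (A : ℤ → ℂ) (hA0 : A 0 = 0) (hA1 : A 1 = ((a 1 : ℝ) : ℂ))
    (hA : ∀ n : ℕ, 2 ≤ n →
      A (n : ℤ) = (((1 + a n : ℝ) : ℂ) - Complex.I * (t : ℂ) * ((η n : ℝ) : ℂ)) * A ((n : ℤ) - 1)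
        - ((a n : ℝ) : ℂ) * A ((n : ℤ) - 2)) :
    ∀ n : ℕ,
      ((B (n : ℤ) - A (n : ℤ)) * star (B (n : ℤ))).re =
        ∑ r ∈ Finset.range (n + 1), t ^ (2 * r) *
          ∑ k ∈ Finset.range (n + 1), rho a k * Kr (shift a k) (shift η k) r (n - k) := by
  exact stmt_16_general a η (fun k hk => (ha k hk).ne') t B hBm hB0 hB A hA0 hA1 hA
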